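/- Let n ≥ 1 and ζ_1, …, ζ_n ∈ ℂ. Then: (i) for every 1 ≤ j ≤ n, x_j^{(n)}(ζ_1, …, ζ_n) = x_1^{(n−j+1)}(ζ_j, …, ζ_n); and (ii) for every N > n, x^{(N)}(ζ_1, …, ζ_n, 0, …, 0) = x^{(n)}(ζ_1, …, ζ_n), i.e., appending zeros to the parameter tuple does not change the resulting Laurent polynomial. -/

import Mathlib

/-- The singular part `(f)₋` of a Laurent series: the sum of its strictly
negative-degree terms. -/
noncomputable def singPart (f : LaurentSeries ℂ) : LaurentSeries ℂ where
  coeff k := if k < 0 then f.coeff k else 0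
  isPWO_support' := by
    apply f.isPWO_support'.mono
    intro k hk
    simp only [Function.mem_support] at hk ⊢
    by_cases h : k < 0
    · simpa [h] using hk
    · simp [h] at hk

/-- The recursively defined Laurent polynomials `x⁽ᵏ⁾(ζ₁, …, ζ_k)`:
`x⁽¹⁾ = ζ₁ z⁻¹` and
`x⁽ᵏ⁺¹⁾ = ((1+|ζ_{k+1}|²) Σ_{p=0}^k conj(ζ_{k+1})^p (x⁽ᵏ⁾)^{p+1} z^{p(k+1)})₋ + ζ_{k+1} z^{−k−1}`
(`ζ` is indexed starting at `1`; the base case is subsumed via `x⁽⁰⁾ = 0`). -/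
noncomputable def xrec (ζ : ℕ → ℂ) : ℕ → LaurentSeries ℂ
  | 0 => 0
  | m + 1 =>
      singPart (HahnSeries.single (0 : ℤ) (((1 + ‖ζ (m + 1)‖ ^ 2 : ℝ) : ℂ)) *
          ∑ p ∈ Finset.range (m + 1),
            HahnSeries.single (0 : ℤ) ((starRingEnd ℂ (ζ (m + 1))) ^ p) *
              xrec ζ m ^ (p + 1) * HahnSeries.single ((p : ℤ) * ((m : ℤ) + 1)) 1)
        + HahnSeries.single (-(m : ℤ) - 1) (ζ (m + 1))

/-
Work modulo the subring of power series, so that `singPart f = singPart g` means `f ≡ g`. The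
recursion step is built from `f / (1 - w f) = ∑ wᵖ fᵖ⁺¹`, an expression with the scaling symmetry
`u · f / (1 - (u w) f) = (u f) / (1 - w (u f))`. Taking `u = zⁱ` shows that multiplication by `zⁱ`,
followed by `singPart`, turns the step from `k + i` to `k + i + 1` into the one from `k` to `k + 1`.
Truncation does no harm: `zᵏ x⁽ᵏ⁾` is a power series, hence so is `zᵖ⁽ᵏ⁺¹⁾ (x⁽ᵏ⁾)ᵖ⁺¹` for `p ≥ k`.
Thus `x⁽ᵏ⁾(ζ_{i+1}, …, ζ_{i+k})` is the singular part of `zⁱ x⁽ᵏ⁺ⁱ⁾(ζ_1, …, ζ_{k+i})`.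
-/

open HahnSeries hiding pow_add
open LaurentSeries

section FracTrunc

variable {A : Type*}

/-- The truncation `∑_{p < n} wᵖ fᵖ⁺¹` of the expansion of `f / (1 - w f)` in powers of `f`; the
recursion defining `xrec` is expressed through it, with `w = zᵏ⁺¹ conj(ζ_{k+1})`. -/
def fracTrunc [Semiring A] (w f : A) (n : ℕ) : A :=
  ∑ p ∈ Finset.range n, w ^ p * f ^ (p + 1)

lemma fracTrunc_zero_left_succ [Semiring A] (f : A) (n : ℕ) : fracTrunc 0 f (n + 1) = f := by
  simp [fracTrunc, Finset.sum_range_succ']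

lemma mul_fracTrunc_mul [CommSemiring A] (u w f : A) (n : ℕ) :
    u * fracTrunc (u * w) f n = fracTrunc w (u * f) n := by
  rw [fracTrunc, fracTrunc, Finset.mul_sum]
  exact Finset.sum_congr rfl fun p _ => by ring

lemma fracTrunc_mem [Semiring A] {S : Type*} [SetLike S A] [SubsemiringClass S A] {s : S}
    {w f : A} (hw : w ∈ s) (hf : f ∈ s) (n : ℕ) : fracTrunc w f n ∈ s :=
  sum_mem fun p _ => mul_mem (pow_mem hw p) (pow_mem hf (p + 1))

lemma pow_mul_pow_succ_sub_mem [CommRing A] {R : Subring A} {w f g : A} (hf : w * f ∈ R)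
    (hg : w * g ∈ R) (hfg : f - g ∈ R) (p : ℕ) :
    w ^ p * f ^ (p + 1) - w ^ p * g ^ (p + 1) ∈ R := by
  induction p with
  | zero => simpa using hfg
  | succ p ih =>
    have telescope : w ^ (p + 1) * f ^ (p + 1 + 1) - w ^ (p + 1) * g ^ (p + 1 + 1)
        = w * f * (w ^ p * f ^ (p + 1) - w ^ p * g ^ (p + 1)) + (f - g) * (w * g) ^ (p + 1) := by
      ring
    rw [telescope]
    exact add_mem (mul_mem hf ih) (mul_mem hfg (pow_mem hg _))

lemma fracTrunc_sub_fracTrunc_mem [CommRing A] {R : Subring A} {w f g : A} (hf : w * f ∈ R)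
    (hg : w * g ∈ R) (hfg : f - g ∈ R) (n : ℕ) : fracTrunc w f n - fracTrunc w g n ∈ R := by
  rw [fracTrunc, fracTrunc, ← Finset.sum_sub_distrib]
  exact sum_mem fun p _ => pow_mul_pow_succ_sub_mem hf hg hfg p

lemma fracTrunc_add_sub_fracTrunc_mem [CommRing A] {R : Subring A} {z c f : A} {k n : ℕ}
    (hz : z ∈ R) (hc : c ∈ R) (hf : z ^ k * f ∈ R) (hkn : k ≤ n) (i : ℕ) :
    fracTrunc (z ^ (k + 1) * c) f (n + i) - fracTrunc (z ^ (k + 1) * c) f n ∈ R := by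
  rw [fracTrunc, fracTrunc, Finset.sum_range_add, add_sub_cancel_left]
  refine sum_mem fun j _ => ?_
  obtain ⟨q, hq⟩ := Nat.exists_eq_add_of_le (hkn.trans (Nat.le_add_right n j))
  have regroup : (z ^ (k + 1) * c) ^ (k + q) * f ^ (k + q + 1)
      = c ^ (k + q) * z ^ q * (z ^ k * f) ^ (k + q + 1) := by
    ring
  rw [hq, regroup]
  exact mul_mem (mul_mem (pow_mem hc _) (pow_mem hz _)) (pow_mem hf _)

lemma fracTrunc_add_sub_fracTrunc_mem_of_sub_mem [CommRing A] {R : Subring A} {z c f g : A}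
    {k n : ℕ} (hz : z ∈ R) (hc : c ∈ R) (hg : z ^ k * g ∈ R) (hfg : f - g ∈ R) (hkn : k ≤ n)
    (i : ℕ) :
    fracTrunc (z ^ (k + 1) * c) f (n + i) - fracTrunc (z ^ (k + 1) * c) g n ∈ R := by
  have hw : z ^ (k + 1) * c ∈ R := mul_mem (pow_mem hz _) hc
  have hwg : z ^ (k + 1) * c * g ∈ R := by
    rw [show z ^ (k + 1) * c * g = z * c * (z ^ k * g) by ring]
    exact mul_mem (mul_mem hz hc) hg
  have hwf : z ^ (k + 1) * c * f ∈ R := by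
    rw [← sub_add_cancel f g, mul_add]
    exact add_mem (mul_mem hw hfg) hwg
  rw [← sub_add_sub_cancel]
  exact add_mem (fracTrunc_sub_fracTrunc_mem hwf hwg hfg (n + i))
    (fracTrunc_add_sub_fracTrunc_mem hz hc hg hkn i)

end FracTrunc

section MulX

variable {R : Type*} [Semiring R]

lemma single_one_pow_mul_single (m : ℕ) (d : ℤ) (a : R) :
    single (1 : ℤ) (1 : R) ^ m * single d a = single (m + d) a := by
  simp [single_pow]

lemma coeff_single_one_pow_mul (m : ℕ) (f : LaurentSeries R) (d : ℤ) :
    (single (1 : ℤ) (1 : R) ^ m * f).coeff d = f.coeff (d - m) := by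
  simp [single_pow, coeff_single_mul]

end MulX

section PowerSeriesSubring

variable {K : Type*} [Field K]

lemma mem_powerSeries_as_subring_iff {f : LaurentSeries K} :
    f ∈ powerSeries_as_subring K ↔ ∀ k < 0, f.coeff k = 0 := by
  rw [← valuation_le_iff_coeff_lt_eq_zero (K := K) (D := 0), neg_zero, WithZero.exp_zero,
    val_le_one_iff_eq_coe]
  simp [Subring.mem_map]

lemma single_mem_powerSeries_as_subring {d : ℤ} (hd : 0 ≤ d) (a : K) :
    single d a ∈ powerSeries_as_subring K :=
  mem_powerSeries_as_subring_iff.mpr fun _ hk => coeff_single_of_ne (hk.trans_le hd).ne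

lemma C_mem_powerSeries_as_subring (a : K) : C a ∈ powerSeries_as_subring K :=
  single_mem_powerSeries_as_subring le_rfl a

end PowerSeriesSubring

section SingPart

lemma coeff_singPart_of_neg (f : LaurentSeries ℂ) {k : ℤ} (hk : k < 0) :
    (singPart f).coeff k = f.coeff k :=
  if_pos hk

lemma coeff_singPart_of_nonneg (f : LaurentSeries ℂ) {k : ℤ} (hk : 0 ≤ k) :
    (singPart f).coeff k = 0 :=
  if_neg hk.not_gt

lemma singPart_add (f g : LaurentSeries ℂ) : singPart (f + g) = singPart f + singPart g := by
  ext k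
  by_cases hk : k < 0 <;> simp [singPart, hk]

lemma singPart_eq_singPart_iff {f g : LaurentSeries ℂ} :
    singPart f = singPart g ↔ f - g ∈ powerSeries_as_subring ℂ := by
  simp only [mem_powerSeries_as_subring_iff, coeff_sub, sub_eq_zero]
  constructor
  · intro h k hk
    rw [← coeff_singPart_of_neg f hk, h, coeff_singPart_of_neg g hk]
  · intro h
    ext k
    rcases lt_or_ge k 0 with hk | hk
    · rw [coeff_singPart_of_neg f hk, coeff_singPart_of_neg g hk, h k hk]
    · rw [coeff_singPart_of_nonneg f hk, coeff_singPart_of_nonneg g hk]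

lemma singPart_eq_zero {f : LaurentSeries ℂ} (hf : f ∈ powerSeries_as_subring ℂ) :
    singPart f = 0 := by
  ext k
  rcases lt_or_ge k 0 with hk | hk
  · rw [coeff_singPart_of_neg f hk, mem_powerSeries_as_subring_iff.mp hf k hk, coeff_zero]
  · rw [coeff_singPart_of_nonneg f hk, coeff_zero]

lemma singPart_singPart (f : LaurentSeries ℂ) : singPart (singPart f) = singPart f := by
  ext k
  by_cases hk : k < 0 <;> simp [singPart, hk]

lemma singPart_single_of_neg {d : ℤ} (hd : d < 0) (a : ℂ) : singPart (single d a) = single d a := by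
  ext k
  rcases lt_or_ge k 0 with hk | hk
  · exact coeff_singPart_of_neg _ hk
  · rw [coeff_singPart_of_nonneg _ hk, coeff_single_of_ne (hd.trans_le hk).ne']

lemma sub_singPart_mem (f : LaurentSeries ℂ) : f - singPart f ∈ powerSeries_as_subring ℂ :=
  singPart_eq_singPart_iff.mp (singPart_singPart f).symm

lemma singPart_mul_singPart {a : LaurentSeries ℂ} (ha : a ∈ powerSeries_as_subring ℂ)
    (f : LaurentSeries ℂ) : singPart (a * singPart f) = singPart (a * f) := by
  refine (singPart_eq_singPart_iff.mpr ?_).symm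
  rw [← mul_sub]
  exact mul_mem ha (sub_singPart_mem f)

lemma mul_singPart_mem {a f : LaurentSeries ℂ} (ha : a ∈ powerSeries_as_subring ℂ)
    (haf : a * f ∈ powerSeries_as_subring ℂ) : a * singPart f ∈ powerSeries_as_subring ℂ := by
  have := sub_mem haf (mul_mem ha (sub_singPart_mem f))
  rwa [← mul_sub, sub_sub_cancel] at this

end SingPart

section Xrec

local notation "𝐳" => (single (1 : ℤ) (1 : ℂ) : LaurentSeries ℂ)

lemma z_mem_powerSeries_as_subring : 𝐳 ∈ powerSeries_as_subring ℂ :=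
  single_mem_powerSeries_as_subring zero_le_one 1

lemma xrec_succ (ζ : ℕ → ℂ) (m : ℕ) :
    xrec ζ (m + 1)
      = singPart (C ((1 + ‖ζ (m + 1)‖ ^ 2 : ℝ) : ℂ) *
          fracTrunc (𝐳 ^ (m + 1) * C (starRingEnd ℂ (ζ (m + 1)))) (xrec ζ m) (m + 1))
        + single (-(m : ℤ) - 1) (ζ (m + 1)) := by
  have hterm (p : ℕ) : single (0 : ℤ) (starRingEnd ℂ (ζ (m + 1)) ^ p) * xrec ζ m ^ (p + 1)
        * single ((p : ℤ) * ((m : ℤ) + 1)) 1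
      = (𝐳 ^ (m + 1) * C (starRingEnd ℂ (ζ (m + 1)))) ^ p * xrec ζ m ^ (p + 1) := by
    have hz : single ((p : ℤ) * ((m : ℤ) + 1)) (1 : ℂ) = (𝐳 ^ (m + 1)) ^ p := by
      simp [single_pow]
    rw [hz, ← C_apply, map_pow]
    ring
  rw [xrec, fracTrunc, C_apply, Finset.sum_congr rfl fun p _ => hterm p]

lemma singPart_xrec (ζ : ℕ → ℂ) (m : ℕ) : singPart (xrec ζ m) = xrec ζ m := by
  cases m with
  | zero => exact singPart_eq_zero (zero_mem _)
  | succ m => rw [xrec_succ, singPart_add, singPart_singPart, singPart_single_of_neg (by lia)]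

lemma z_pow_mul_xrec_mem (ζ : ℕ → ℂ) (m : ℕ) : 𝐳 ^ m * xrec ζ m ∈ powerSeries_as_subring ℂ := by
  have hz := z_mem_powerSeries_as_subring
  have hC := C_mem_powerSeries_as_subring (K := ℂ)
  induction m with
  | zero => simp [xrec]
  | succ m ih =>
    rw [xrec_succ, mul_add, single_one_pow_mul_single]
    refine add_mem (mul_singPart_mem (pow_mem hz _) ?_)
      (single_mem_powerSeries_as_subring (by lia) _)
    rw [mul_left_comm, mul_fracTrunc_mul, pow_succ' 𝐳, mul_assoc]
    exact mul_mem (hC _) (fracTrunc_mem (hC _) (mul_mem hz ih) _)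

lemma singPart_z_pow_mul_xrec (ζ : ℕ → ℂ) (k i : ℕ) :
    singPart (𝐳 ^ i * xrec ζ (k + i)) = xrec (fun l => ζ (l + i)) k := by
  have hz := z_mem_powerSeries_as_subring
  have hC := C_mem_powerSeries_as_subring (K := ℂ)
  induction k with
  | zero => rw [zero_add]; exact singPart_eq_zero (z_pow_mul_xrec_mem ζ i)
  | succ k ih =>
    have hindex : k + 1 + i = k + i + 1 := by lia
    rw [hindex, xrec_succ, xrec_succ]
    simp only [hindex]
    set x := xrec ζ (k + i)
    set y := xrec (fun l => ζ (l + i)) k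
    set c := C (Γ := ℤ) (starRingEnd ℂ (ζ (k + i + 1)))
    have hy : 𝐳 ^ k * y ∈ powerSeries_as_subring ℂ := z_pow_mul_xrec_mem _ k
    have hxy : 𝐳 ^ i * x - y ∈ powerSeries_as_subring ℂ := ih ▸ sub_singPart_mem _
    have hscale : 𝐳 ^ i * fracTrunc (𝐳 ^ (k + i + 1) * c) x (k + i + 1)
        = fracTrunc (𝐳 ^ (k + 1) * c) (𝐳 ^ i * x) (k + 1 + i) := by
      rw [← mul_fracTrunc_mul, ← mul_assoc, ← pow_add, hindex, add_comm i, hindex]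
    have hdegree : (i : ℤ) + (-((k + i : ℕ) : ℤ) - 1) = -(k : ℤ) - 1 := by lia
    rw [mul_add, singPart_add, singPart_mul_singPart (pow_mem hz i), mul_left_comm, hscale,
      single_one_pow_mul_single, hdegree, singPart_single_of_neg (by lia), add_left_inj,
      singPart_eq_singPart_iff, ← mul_sub]
    exact mul_mem (hC _)
      (fracTrunc_add_sub_fracTrunc_mem_of_sub_mem hz (hC _) hy hxy k.le_succ i)

end Xrec

lemma coeff_xrec_shift (ζ : ℕ → ℂ) (k i : ℕ) {d : ℤ} (hd : d < 0) :
    (xrec (fun l => ζ (l + i)) k).coeff d = (xrec ζ (k + i)).coeff (d - i) := by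
  rw [← singPart_z_pow_mul_xrec, coeff_singPart_of_neg _ hd, coeff_single_one_pow_mul]

lemma xrec_congr {ζ η : ℕ → ℂ} {m : ℕ} (h : ∀ i, 1 ≤ i → i ≤ m → ζ i = η i) :
    xrec ζ m = xrec η m := by
  induction m with
  | zero => rfl
  | succ m ih =>
    rw [xrec, xrec, ih fun i hi him => h i hi (him.trans m.le_succ), h (m + 1) (by lia) le_rfl]

lemma xrec_succ_of_eq_zero {ζ : ℕ → ℂ} {m : ℕ} (h : ζ (m + 1) = 0) :
    xrec ζ (m + 1) = xrec ζ m := by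
  simp [xrec_succ, h, fracTrunc_zero_left_succ, singPart_xrec]

lemma xrec_eq_of_forall_eq_zero {ζ : ℕ → ℂ} {n N : ℕ} (hnN : n ≤ N)
    (h : ∀ i, n < i → i ≤ N → ζ i = 0) : xrec ζ N = xrec ζ n := by
  induction N, hnN using Nat.le_induction with
  | base => rfl
  | succ N hnN ih =>
    rw [xrec_succ_of_eq_zero (h (N + 1) (Nat.lt_succ_of_le hnN) le_rfl)]
    exact ih fun i hi hiN => h i hi (hiN.trans N.le_succ)

/-- (i) `x_j⁽ⁿ⁾(ζ₁, …, ζ_n) = x₁⁽ⁿ⁻ʲ⁺¹⁾(ζ_j, …, ζ_n)` for `1 ≤ j ≤ n` (the coefficient of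
`z^{-j}` in `x⁽ⁿ⁾` equals the coefficient of `z^{-1}` in the shifted recursion);
(ii) appending zeros to the parameter tuple does not change the Laurent polynomial:
`x⁽ᴺ⁾(ζ₁, …, ζ_n, 0, …, 0) = x⁽ⁿ⁾(ζ₁, …, ζ_n)` for `N > n`. -/
theorem stmt11 (n : ℕ) (hn : 1 ≤ n) (ζ : ℕ → ℂ) :
    (∀ j, 1 ≤ j → j ≤ n →
      (xrec ζ n).coeff (-(j : ℤ))
        = (xrec (fun i => ζ (i + j - 1)) (n - j + 1)).coeff (-1)) ∧
    (∀ N, n < N → xrec (fun i => if i ≤ n then ζ i else 0) N = xrec ζ n) := by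
  constructor
  · intro j hj hjn
    obtain ⟨i, rfl⟩ := Nat.exists_eq_add_of_le' hj
    have hshift := coeff_xrec_shift ζ (n - (i + 1) + 1) i (d := -1) (by norm_num)
    rw [show n - (i + 1) + 1 + i = n by lia, show -1 - (i : ℤ) = -((i + 1 : ℕ) : ℤ) by lia]
      at hshift
    exact hshift.symm
  · intro N hN
    rw [xrec_eq_of_forall_eq_zero hN.le fun i hi _ => if_neg hi.not_ge]
    exact xrec_congr fun i _ hi => if_pos hi
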